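/- arXiv:1911.12473 — 3 statements merged into one kernel-verified Lean document; each statement's English description precedes it below -/
import Mathlib

section
/- Let (Ω, 𝓕, μ) be a probability space, 𝒯 a standard Borel space, C a positive natural number, Z : Ω → 𝒯 measurable, and c*, c_t : Ω → Fin C measurable random variables such that condDistrib c* Z μ t = condDistrib c_t Z μ t for (μ.map Z)-almost every t. Let u : 𝒯 × Fin C → ℝ be bounded measurable, and let F : Ω → (Fin C → ℝ) be such that ω ↦ F ω (c* ω) and ω ↦ F ω (c_t ω) are integrable. Then E[F(c*) − F(c_t)] = E[F(c*) − u(Z, c*)] + E[u(Z, c_t) − F(c_t)]. -/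
open MeasureTheory ProbabilityTheory

/-- Regret decomposition for Thompson sampling: if the optimal arm `cstar` and the
selected arm `ct` are identically distributed conditionally on the history `Z`,
then for any bounded measurable confidence-bound function `u` of the history and
the arm, `E[F(c*) − F(c_t)] = E[F(c*) − u(Z, c*)] + E[u(Z, c_t) − F(c_t)]`. -/
theorem regret_decomposition_ucb
    {Ω 𝒯 : Type*} [MeasurableSpace Ω]
    [MeasurableSpace 𝒯] [StandardBorelSpace 𝒯]
    (μ : Measure Ω) [IsProbabilityMeasure μ]
    (C : ℕ) [NeZero C]
    (Z : Ω → 𝒯) (cstar ct : Ω → Fin C)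
    (hZ : Measurable Z) (hcstar : Measurable cstar) (hct : Measurable ct)
    (hcond : ∀ᵐ t ∂(μ.map Z), condDistrib cstar Z μ t = condDistrib ct Z μ t)
    (u : 𝒯 × Fin C → ℝ) (hu : Measurable u)
    (M : ℝ) (hbound : ∀ p, |u p| ≤ M)
    (F : Ω → Fin C → ℝ)
    (hF1 : Integrable (fun ω => F ω (cstar ω)) μ)
    (hF2 : Integrable (fun ω => F ω (ct ω)) μ) :
    ∫ ω, (F ω (cstar ω) - F ω (ct ω)) ∂μ
      = (∫ ω, (F ω (cstar ω) - u (Z ω, cstar ω)) ∂μ)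
        + ∫ ω, (u (Z ω, ct ω) - F ω (ct ω)) ∂μ := by
  have joint_law : μ.map (fun ω => (Z ω, cstar ω)) = μ.map (fun ω => (Z ω, ct ω)) := by
    rw [← compProd_map_condDistrib hcstar.aemeasurable,
      ← compProd_map_condDistrib hct.aemeasurable]
    exact Measure.compProd_congr hcond
  have integral_u_eq : ∫ ω, u (Z ω, cstar ω) ∂μ = ∫ ω, u (Z ω, ct ω) ∂μ := by
    rw [← integral_map (hZ.prodMk hcstar).aemeasurable hu.aestronglyMeasurable, joint_law,
      integral_map (hZ.prodMk hct).aemeasurable hu.aestronglyMeasurable]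
  have integrable_u (c : Ω → Fin C) (hc : Measurable c) :
      Integrable (fun ω => u (Z ω, c ω)) μ :=
    Integrable.of_bound (hu.comp (hZ.prodMk hc)).aestronglyMeasurable M
      (ae_of_all _ fun _ => hbound _)
  rw [integral_sub hF1 hF2, integral_sub hF1 (integrable_u cstar hcstar),
    integral_sub (integrable_u ct hct) hF2, integral_u_eq]
  ring
end

section
/- Let C be a natural number, let α be a real number with 0 ≤ α < 1, and let T_c : Fin C → ℕ with total T = ∑_{c} T_c satisfying T ≥ 1. Then ∑_{c} ∑_{t=1}^{T_c} √( (log t) / t^{1−α} ) ≤ 2 · √( C · T^{α+1} · log T ), where log is the natural logarithm, naturals are coerced to reals, and powers are real powers. -/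
open Finset

/-- The sum form of `∫₀ⁿ x ^ (p - 1) = n ^ p / p` for exponents `0 < p ≤ 1`. -/
lemma mul_sum_Icc_rpow_sub_one_le {p : ℝ} (hp0 : 0 < p) (hp1 : p ≤ 1) (n : ℕ) :
    p * ∑ t ∈ Finset.Icc 1 n, (t : ℝ) ^ (p - 1) ≤ (n : ℝ) ^ p := by
  induction n with
  | zero => simp [Real.zero_rpow hp0.ne']
  | succ n ih =>
    rw [Finset.sum_Icc_succ_top (by omega), mul_add]
    have hm : (0 : ℝ) < ((n + 1 : ℕ) : ℝ) := by positivity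
    set m : ℝ := ((n + 1 : ℕ) : ℝ) with hm_def
    have hnm : (n : ℝ) = m * (1 + -(1 / m)) := by
      field_simp
      simp [hm_def]
    have hinv : 1 / m ≤ 1 := by
      rw [div_le_one hm, hm_def]
      exact_mod_cast Nat.succ_pos n
    have hbern : (1 + -(1 / m)) ^ p ≤ 1 + p * -(1 / m) :=
      rpow_one_add_le_one_add_mul_self (by linarith) hp0.le hp1
    have hstep : (n : ℝ) ^ p ≤ m ^ p - p * m ^ (p - 1) := by
      rw [hnm, Real.mul_rpow hm.le (by linarith), Real.rpow_sub_one hm.ne']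
      calc m ^ p * (1 + -(1 / m)) ^ p ≤ m ^ p * (1 + p * -(1 / m)) := by gcongr
        _ = m ^ p - p * (m ^ p / m) := by ring
    linarith

lemma sum_natCast_rpow_add_one_le {ι : Type*} (s : Finset ι) (f : ι → ℕ) {α : ℝ} (hα : 0 ≤ α) :
    ∑ i ∈ s, (f i : ℝ) ^ (α + 1) ≤ ((∑ i ∈ s, f i : ℕ) : ℝ) ^ (α + 1) := by
  have hα1 : α + 1 ≠ 0 := by positivity
  rw [Real.rpow_add_one' (Nat.cast_nonneg _) hα1]
  nth_rewrite 2 [Nat.cast_sum]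
  rw [Finset.mul_sum]
  refine Finset.sum_le_sum fun i hi => ?_
  rw [Real.rpow_add_one' (Nat.cast_nonneg _) hα1]
  gcongr
  exact Finset.single_le_sum (fun j _ => Nat.zero_le (f j)) hi

lemma sum_Icc_sqrt_log_div_rpow_le {α : ℝ} (hα0 : 0 ≤ α) (hα1 : α < 1) {n T : ℕ} (hn : n ≤ T) :
    ∑ t ∈ Finset.Icc 1 n, √(Real.log t / (t : ℝ) ^ (1 - α))
      ≤ 2 * √(Real.log T) * (n : ℝ) ^ ((α + 1) / 2) := by
  have hterm : ∀ t ∈ Finset.Icc 1 n, √(Real.log t / (t : ℝ) ^ (1 - α))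
      ≤ √(Real.log T) * (t : ℝ) ^ ((α + 1) / 2 - 1) := by
    intro t ht
    obtain ⟨ht1, htn⟩ := Finset.mem_Icc.mp ht
    have ht0 : (0 : ℝ) < t := by exact_mod_cast ht1
    have hpow : √((t : ℝ) ^ (1 - α)) = ((t : ℝ) ^ ((α + 1) / 2 - 1))⁻¹ := by
      rw [Real.sqrt_eq_rpow, ← Real.rpow_mul ht0.le, ← Real.rpow_neg ht0.le]
      congr 1
      ring
    rw [Real.sqrt_div (Real.log_nonneg (by exact_mod_cast ht1)), hpow, div_inv_eq_mul]
    gcongr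
    exact htn.trans hn
  refine (Finset.sum_le_sum hterm).trans ?_
  rw [← Finset.mul_sum, mul_comm 2, mul_assoc]
  gcongr
  have hsum := mul_sum_Icc_rpow_sub_one_le (p := (α + 1) / 2) (by linarith) (by linarith) n
  have hnonneg : 0 ≤ ∑ t ∈ Finset.Icc 1 n, (t : ℝ) ^ ((α + 1) / 2 - 1) := by positivity
  nlinarith [mul_nonneg hα0 hnonneg]

/-- Core analytic bound for the confidence-width sum in Lemma 1 (Bandit-BO):
`∑_c ∑_{t=1}^{T_c} √((log t) / t^{1−α}) ≤ 2 √(C · T^{α+1} · log T)`. -/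
theorem sum_sqrt_log_div_rpow_le (C : ℕ) (α : ℝ) (hα0 : 0 ≤ α) (hα1 : α < 1)
    (Tc : Fin C → ℕ) (T : ℕ) (hT : T = ∑ c, Tc c) (hT1 : 1 ≤ T) :
    ∑ c, ∑ t ∈ Finset.Icc 1 (Tc c), Real.sqrt (Real.log t / (t : ℝ) ^ (1 - α))
      ≤ 2 * Real.sqrt ((C : ℝ) * (T : ℝ) ^ (α + 1) * Real.log T) := by
  have hle : ∀ c, Tc c ≤ T := fun c =>
    hT ▸ Finset.single_le_sum (fun j _ => Nat.zero_le (Tc j)) (Finset.mem_univ c)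
  have hcauchy : ∑ c, (Tc c : ℝ) ^ ((α + 1) / 2) ≤ √((C : ℝ) * (T : ℝ) ^ (α + 1)) := by
    apply Real.le_sqrt_of_sq_le
    refine sq_sum_le_card_mul_sum_sq.trans ?_
    rw [Finset.card_univ, Fintype.card_fin]
    gcongr
    have hsq : ∀ c, ((Tc c : ℝ) ^ ((α + 1) / 2)) ^ 2 = (Tc c : ℝ) ^ (α + 1) := fun c => by
      rw [← Real.rpow_mul_natCast (Nat.cast_nonneg _)]
      norm_num
    simp only [hsq]
    rw [hT]
    exact sum_natCast_rpow_add_one_le _ Tc hα0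
  calc ∑ c, ∑ t ∈ Finset.Icc 1 (Tc c), √(Real.log t / (t : ℝ) ^ (1 - α))
      ≤ ∑ c, 2 * √(Real.log T) * (Tc c : ℝ) ^ ((α + 1) / 2) :=
        Finset.sum_le_sum fun c _ => sum_Icc_sqrt_log_div_rpow_le hα0 hα1 (hle c)
    _ = 2 * √(Real.log T) * ∑ c, (Tc c : ℝ) ^ ((α + 1) / 2) := by rw [Finset.mul_sum]
    _ ≤ 2 * √(Real.log T) * √((C : ℝ) * (T : ℝ) ^ (α + 1)) := by gcongr
    _ = 2 * √((C : ℝ) * (T : ℝ) ^ (α + 1) * Real.log T) := by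
        rw [Real.sqrt_mul (by positivity) (Real.log T)]
        ring
end

section
/- Let C be a natural number, let α be a real number with 0 ≤ α < 1, and let T_c : Fin C → ℕ with total T = ∑_{c} T_c satisfying T ≥ 1. Then ∑_{c} √( (T_c)^{α+1} · log T_c ) ≤ √( C · T^{α+1} · log T ), where log is the natural logarithm (with log 0 = 0 by convention), naturals are coerced to reals, and powers are real powers. -/
open Finset

/-- Superadditivity of `x ↦ x ^ p` on the nonnegative reals, for `1 ≤ p`. -/
theorem sum_rpow_le_rpow_sum {ι : Type*} (s : Finset ι) (f : ι → ℝ) {p : ℝ} (hp : 1 ≤ p)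
    (hf : ∀ i ∈ s, 0 ≤ f i) : ∑ i ∈ s, f i ^ p ≤ (∑ i ∈ s, f i) ^ p := by
  classical
  induction s using Finset.induction_on with
  | empty => simp [Real.zero_rpow (by linarith : p ≠ 0)]
  | insert a s ha ih =>
    rw [sum_insert ha, sum_insert ha]
    have hs : ∀ i ∈ s, 0 ≤ f i := fun i hi => hf i (mem_insert_of_mem hi)
    calc f a ^ p + ∑ i ∈ s, f i ^ p
        ≤ f a ^ p + (∑ i ∈ s, f i) ^ p := by gcongr; exact ih hs
      _ ≤ (f a + ∑ i ∈ s, f i) ^ p :=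
        Real.add_rpow_le_rpow_add (hf a (mem_insert_self a s)) (sum_nonneg hs) hp

/-- Core analytic bound in Lemma 2 (Bandit-BO):
`∑_c √(T_c^{α+1} · log T_c) ≤ √(C · T^{α+1} · log T)` when `T = ∑_c T_c ≥ 1`. -/
theorem sum_sqrt_rpow_mul_log_le (C : ℕ) (α : ℝ) (hα0 : 0 ≤ α) (hα1 : α < 1)
    (Tc : Fin C → ℕ) (T : ℕ) (hT : T = ∑ c, Tc c) (hT1 : 1 ≤ T) :
    ∑ c, Real.sqrt ((Tc c : ℝ) ^ (α + 1) * Real.log (Tc c))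
      ≤ Real.sqrt ((C : ℝ) * (T : ℝ) ^ (α + 1) * Real.log T) := by
  have hlog (c : Fin C) : Real.log (Tc c) ≤ Real.log T := by
    rcases Nat.eq_zero_or_pos (Tc c) with h | h
    · simpa [h] using Real.log_natCast_nonneg T
    · have hle : Tc c ≤ T := hT ▸ single_le_sum (fun i _ => Nat.zero_le (Tc i)) (mem_univ c)
      exact Real.log_le_log (by exact_mod_cast h) (by exact_mod_cast hle)
  have hpow : ∑ c, (Tc c : ℝ) ^ (α + 1) ≤ (T : ℝ) ^ (α + 1) := by
    rw [hT, Nat.cast_sum]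
    exact sum_rpow_le_rpow_sum _ _ (by linarith) fun c _ => Nat.cast_nonneg _
  apply Real.le_sqrt_of_sq_le
  calc (∑ c, Real.sqrt ((Tc c : ℝ) ^ (α + 1) * Real.log (Tc c))) ^ 2
      ≤ C * ∑ c, Real.sqrt ((Tc c : ℝ) ^ (α + 1) * Real.log (Tc c)) ^ 2 := by
        simpa using sq_sum_le_card_mul_sum_sq (s := univ)
          (f := fun c => Real.sqrt ((Tc c : ℝ) ^ (α + 1) * Real.log (Tc c)))
    _ = C * ∑ c, (Tc c : ℝ) ^ (α + 1) * Real.log (Tc c) := by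
        congr 1
        refine sum_congr rfl fun c _ => Real.sq_sqrt ?_
        exact mul_nonneg (by positivity) (Real.log_natCast_nonneg _)
    _ ≤ C * ∑ c, (Tc c : ℝ) ^ (α + 1) * Real.log T := by
        gcongr C * ∑ c, _ * ?_ with c
        exact hlog c
    _ = C * (∑ c, (Tc c : ℝ) ^ (α + 1)) * Real.log T := by rw [← sum_mul, mul_assoc]
    _ ≤ C * (T : ℝ) ^ (α + 1) * Real.log T := by
        have := Real.log_natCast_nonneg T
        gcongr
end
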